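/- arXiv:2511.07631 — 3 statements merged into one kernel-verified Lean document; each statement's English description precedes it below -/
import Mathlib

section
/- If X is an edge-transitive simplicial surface, then for every face F of X the Aut(X)-orbit of F has size |X_2| or size |X_2|/2, i.e. either |F^{Aut(X)}| = |X_2| or 2·|F^{Aut(X)}| = |X_2|. -/
open Finset

/-- A (connected) simplicial surface: a finite, downward-closed family of nonempty subsets of
the vertex set `α`, pure of dimension 2, such that every edge lies in exactly two faces,
the faces around each vertex form an umbrella, and the surface is connected. -/
structure SimplicialSurface (α : Type*) [Fintype α] [DecidableEq α] where
  cplx : Finset (Finset α)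
  nonempty_of_mem : ∀ s ∈ cplx, s.Nonempty
  down_closed : ∀ s ∈ cplx, ∀ t : Finset α, t.Nonempty → t ⊆ s → t ∈ cplx
  card_le_three : ∀ s ∈ cplx, s.card ≤ 3
  pure_two : ∀ s ∈ cplx, ∃ F ∈ cplx, s ⊆ F ∧ F.card = 3
  dim_two : ∃ F ∈ cplx, F.card = 3
  all_vertices : ∀ x : α, {x} ∈ cplx
  edge_in_two_faces : ∀ e ∈ cplx, e.card = 2 →
    (cplx.filter (fun F => e ⊆ F ∧ F.card = 3)).card = 2
  umbrella_exists : ∀ v : α, ∃ n : ℕ, 0 < n ∧ ∃ u : Fin n → Finset α,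
    Function.Injective u ∧
    (∀ i, u i ∈ cplx ∧ (u i).card = 3 ∧ v ∈ u i) ∧
    (∀ F ∈ cplx, F.card = 3 → v ∈ F → ∃ i, u i = F) ∧
    (∀ i : Fin n, (u i ∩ u (finRotate n i)).card = 2)
  connected : ∀ F ∈ cplx, ∀ G ∈ cplx, F.card = 3 → G.card = 3 →
    Relation.ReflTransGen (fun A B => A ∈ cplx ∧ B ∈ cplx ∧ (A ∩ B).card = 2) F G

lemma Equiv.Perm.finset_image_mul {α : Type*} [DecidableEq α] (π σ : Equiv.Perm α)
    (s : Finset α) :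
    Finset.image ⇑(π * σ) s = Finset.image ⇑π (Finset.image ⇑σ s) := by
  rw [Finset.image_image]
  rfl

namespace SimplicialSurface

variable {α : Type*} [Fintype α] [DecidableEq α] (X : SimplicialSurface α)

/-- The set `X_2` of faces of `X`, i.e. the 3-element members. -/
def faces : Finset (Finset α) := X.cplx.filter fun s => s.card = 3

/-- The set `X_1` of edges of `X`, i.e. the 2-element members. -/
def edges : Finset (Finset α) := X.cplx.filter fun s => s.card = 2

/-- The automorphism group of `X`: permutations of the vertices mapping members of the
complex to members of the complex. -/
def aut : Subgroup (Equiv.Perm α) where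
  carrier := { π | ∀ s : Finset α, s ∈ X.cplx ↔ Finset.image ⇑π s ∈ X.cplx }
  one_mem' := by intro s; simp
  mul_mem' := by
    intro π σ hπ hσ s
    rw [Equiv.Perm.finset_image_mul, ← hπ (Finset.image ⇑σ s), ← hσ s]
  inv_mem' := by
    intro π hπ s
    have h2 : Finset.image ⇑π (Finset.image ⇑π⁻¹ s) = s := by ext x; simp
    have h := hπ (Finset.image ⇑π⁻¹ s)
    rw [h2] at h
    exact h.symm

/-- The setwise stabiliser in `Aut(X)` of a set `s` of vertices. -/
def stab (s : Finset α) : Subgroup (Equiv.Perm α) where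
  carrier := { π | π ∈ X.aut ∧ Finset.image ⇑π s = s }
  one_mem' := ⟨X.aut.one_mem, by simp⟩
  mul_mem' := by
    rintro π σ ⟨hπ, hπs⟩ ⟨hσ, hσs⟩
    exact ⟨X.aut.mul_mem hπ hσ, by rw [Equiv.Perm.finset_image_mul, hσs, hπs]⟩
  inv_mem' := by
    rintro π ⟨hπ, hπs⟩
    refine ⟨X.aut.inv_mem hπ, ?_⟩
    calc Finset.image ⇑π⁻¹ s = Finset.image ⇑π⁻¹ (Finset.image ⇑π s) := by rw [hπs]
      _ = s := by ext x; simp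

/-- `X` is edge-transitive if `Aut(X)` acts transitively on the edges `X_1`. -/
def EdgeTransitive : Prop :=
  ∀ e₁ ∈ X.edges, ∀ e₂ ∈ X.edges, ∃ π ∈ X.aut, Finset.image ⇑π e₁ = e₂

/-- The orbit of a set of vertices under `Aut(X)`. -/
def orbit (s : Finset α) : Set (Finset α) := { t | ∃ π ∈ X.aut, Finset.image ⇑π s = t }

/-- The set of `Aut(X)`-orbits on the faces of `X`. -/
def faceOrbits : Set (Set (Finset α)) := { O | ∃ F ∈ X.faces, O = X.orbit F }

/-- The set of `Aut(X)`-orbits on the vertices of `X`. -/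
def vertexOrbits : Set (Set α) := { O | ∃ v : α, O = { w | ∃ π ∈ X.aut, π v = w } }

/-- The degree of a vertex: the number of faces containing it. -/
def degree (v : α) : ℕ := (X.faces.filter fun F => v ∈ F).card

end SimplicialSurface

/-!
Let `O` be the orbit of a face. Edge-transitivity makes every edge lie in the same number `l` of
faces of `O`, and `1 ≤ l ≤ 2` because every edge lies in exactly two faces of the surface. Counting
the incident pairs of an edge and a face gives `3 * |O| = l * |X_1|` and `3 * |X_2| = 2 * |X_1|`,
hence `2 * |O| = l * |X_2|`. Only the incidences `r` between the set `E` of edges and the set `T` of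
faces enter this count, so it works for any group acting on an incidence structure.
-/

section Incidence

variable {G β γ : Type*} [Group G] [MulAction G β] [MulAction G γ]
  {r : β → γ → Prop} [DecidableRel r]

lemma card_bipartiteAbove_smul (hr : ∀ (g : G) e t, r e t → r (g • e) (g • t))
    {A : Finset γ} (hA : ∀ g : G, ∀ t ∈ A, g • t ∈ A) (g : G) (e : β) :
    #(A.bipartiteAbove r (g • e)) = #(A.bipartiteAbove r e) := by
  have card_le (h : G) (e : β) : #(A.bipartiteAbove r e) ≤ #(A.bipartiteAbove r (h • e)) := by
    refine card_le_card_of_injOn (h • ·) (fun t ht => ?_) (MulAction.injective h).injOn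
    obtain ⟨htA, hrt⟩ := (mem_bipartiteAbove r).1 ht
    exact (mem_bipartiteAbove r).2 ⟨hA h t htA, hr h e t hrt⟩
  refine le_antisymm ?_ (card_le g e)
  simpa only [inv_smul_smul] using card_le g⁻¹ (g • e)

lemma exists_pos_le_mul_card_eq_of_invariant {E : Finset β} {A T : Finset γ} {k d : ℕ}
    (hr : ∀ (g : G) e t, r e t → r (g • e) (g • t))
    (htrans : ∀ e₁ ∈ E, ∀ e₂ ∈ E, ∃ g : G, g • e₁ = e₂)
    (hk : 0 < k) (hbelow : ∀ t ∈ T, #(E.bipartiteBelow r t) = k)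
    (habove : ∀ e ∈ E, #(T.bipartiteAbove r e) = d)
    (hA : ∀ g : G, ∀ t ∈ A, g • t ∈ A) (hAT : A ⊆ T) (hne : A.Nonempty) :
    ∃ l, 0 < l ∧ l ≤ d ∧ d * #A = l * #T := by
  obtain ⟨t, ht⟩ := hne
  obtain ⟨e, he⟩ : (E.bipartiteBelow r t).Nonempty := card_pos.1 (by rwa [hbelow t (hAT ht)])
  obtain ⟨heE, het⟩ := (mem_bipartiteBelow r).1 he
  have hconst : ∀ e' ∈ E, #(A.bipartiteAbove r e') = #(A.bipartiteAbove r e) := by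
    intro e' he'
    obtain ⟨g, rfl⟩ := htrans e heE e' he'
    exact card_bipartiteAbove_smul hr hA g e
  have hcountA : #E * #(A.bipartiteAbove r e) = #A * k :=
    card_mul_eq_card_mul r hconst fun s hs => hbelow s (hAT hs)
  have hcountT : #E * d = #T * k := card_mul_eq_card_mul r habove hbelow
  refine ⟨#(A.bipartiteAbove r e), card_pos.2 ⟨t, (mem_bipartiteAbove r).2 ⟨ht, het⟩⟩, ?_, ?_⟩
  · rw [← habove e heE]
    exact card_le_card (filter_subset_filter _ hAT)
  · refine Nat.eq_of_mul_eq_mul_right hk ?_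
    calc d * #A * k = d * (#E * #(A.bipartiteAbove r e)) := by rw [hcountA, mul_assoc]
      _ = #(A.bipartiteAbove r e) * (#E * d) := by ring
      _ = #(A.bipartiteAbove r e) * #T * k := by rw [hcountT, mul_assoc]

theorem orbit_ncard_of_edgeTransitive_general {E : Finset β} {T : Finset γ} {k : ℕ}
    (hr : ∀ (g : G) e t, r e t → r (g • e) (g • t))
    (htrans : ∀ e₁ ∈ E, ∀ e₂ ∈ E, ∃ g : G, g • e₁ = e₂)
    (hk : 0 < k) (hbelow : ∀ t ∈ T, #(E.bipartiteBelow r t) = k)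
    (habove : ∀ e ∈ E, #(T.bipartiteAbove r e) = 2)
    (hT : ∀ g : G, ∀ t ∈ T, g • t ∈ T) {t : γ} (ht : t ∈ T) :
    (MulAction.orbit G t).ncard = #T ∨ 2 * (MulAction.orbit G t).ncard = #T := by
  have horbit : MulAction.orbit G t ⊆ T := by
    rintro _ ⟨g, rfl⟩
    exact hT g t ht
  lift MulAction.orbit G t to Finset γ using T.finite_toSet.subset horbit with A hA
  have mem_A (s : γ) : s ∈ A ↔ s ∈ MulAction.orbit G t := by rw [← hA, mem_coe]
  obtain ⟨l, hl_pos, hl_le, hcard⟩ :=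
    exists_pos_le_mul_card_eq_of_invariant hr htrans hk hbelow habove
      (fun g s hs => (mem_A _).2 (MulAction.mem_orbit_of_mem_orbit g ((mem_A s).1 hs)))
      (coe_subset.1 horbit) ⟨t, (mem_A t).2 (MulAction.mem_orbit_self t)⟩
  rw [Set.ncard_coe_finset]
  obtain rfl | rfl : l = 1 ∨ l = 2 := by omega
  · exact Or.inr (by rwa [one_mul] at hcard)
  · exact Or.inl (Nat.eq_of_mul_eq_mul_left two_pos hcard)

end Incidence

open scoped Pointwise

namespace SimplicialSurface

variable {α : Type*} [Fintype α] [DecidableEq α] (X : SimplicialSurface α)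

lemma orbit_eq_mulActionOrbit (s : Finset α) : X.orbit s = MulAction.orbit X.aut s := by
  ext t
  exact ⟨fun ⟨π, hπ, h⟩ => ⟨⟨π, hπ⟩, h⟩, fun ⟨π, h⟩ => ⟨π, π.2, h⟩⟩

variable {X} in
lemma EdgeTransitive.exists_smul_eq (hX : X.EdgeTransitive) {e₁ e₂ : Finset α} (h₁ : e₁ ∈ X.edges)
    (h₂ : e₂ ∈ X.edges) : ∃ π : X.aut, π • e₁ = e₂ := by
  obtain ⟨π, hπ, h⟩ := hX e₁ h₁ e₂ h₂
  exact ⟨⟨π, hπ⟩, h⟩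

lemma smul_mem_faces (π : X.aut) {F : Finset α} (hF : F ∈ X.faces) : π • F ∈ X.faces := by
  obtain ⟨hF, hcard⟩ := mem_filter.1 hF
  exact mem_filter.2 ⟨(π.2 F).1 hF, (card_smul_finset π F).trans hcard⟩

lemma bipartiteBelow_edges_eq_powersetCard {F : Finset α} (hF : F ∈ X.cplx) :
    X.edges.bipartiteBelow (· ⊆ ·) F = F.powersetCard 2 := by
  ext e
  simp only [mem_bipartiteBelow, edges, mem_filter, mem_powersetCard]
  refine ⟨fun ⟨⟨_, hcard⟩, heF⟩ => ⟨heF, hcard⟩, fun ⟨heF, hcard⟩ => ⟨⟨?_, hcard⟩, heF⟩⟩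
  exact X.down_closed F hF e (card_pos.1 (by omega)) heF

lemma card_bipartiteBelow_edges {F : Finset α} (hF : F ∈ X.faces) :
    #(X.edges.bipartiteBelow (· ⊆ ·) F) = 3 := by
  obtain ⟨hF, hcard⟩ := mem_filter.1 hF
  rw [X.bipartiteBelow_edges_eq_powersetCard hF, card_powersetCard, hcard,
    Nat.choose_succ_self_right]

lemma card_bipartiteAbove_faces {e : Finset α} (he : e ∈ X.edges) :
    #(X.faces.bipartiteAbove (· ⊆ ·) e) = 2 := by
  obtain ⟨he, hcard⟩ := mem_filter.1 he
  simpa only [bipartiteAbove, faces, filter_filter, and_comm] using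
    X.edge_in_two_faces e he hcard

end SimplicialSurface

/-- If `X` is an edge-transitive simplicial surface, then for every face `F` the
`Aut(X)`-orbit of `F` has size `|X_2|` or size `|X_2|/2`. -/
theorem orbit_ncard_of_edgeTransitive
    {α : Type*} [Fintype α] [DecidableEq α] (X : SimplicialSurface α)
    (hX : X.EdgeTransitive) (F : Finset α) (hF : F ∈ X.faces) :
    (X.orbit F).ncard = X.faces.card ∨ 2 * (X.orbit F).ncard = X.faces.card := by
  rw [X.orbit_eq_mulActionOrbit]
  exact orbit_ncard_of_edgeTransitive_general (fun _ _ _ => smul_finset_subset_smul_finset)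
    (fun _ h₁ _ h₂ => hX.exists_smul_eq h₁ h₂) three_pos
    (fun _ hG => X.card_bipartiteBelow_edges hG) (fun _ he => X.card_bipartiteAbove_faces he)
    (fun π _ hG => X.smul_mem_faces π hG) hF
end

section
/- If X is an edge-transitive simplicial surface, then Aut(X) acts transitively on the set X_0 of vertices of X. -/
open Finset

/-!
In an edge-transitive graph with an edge `ab`, every vertex that is not isolated lies in the orbit
of `a` or of `b`. If these two orbits differ, every edge joins one to the other and the graph is
bipartite. The 1-skeleton of a surface contains triangles, hence the two orbits coincide.
-/

section GraphAction

variable {G V : Type*} [Group G] [MulAction G V] {Γ : SimpleGraph V}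

variable (G Γ) in
/-- The action of `G` on the vertices of `Γ` is edge-transitive if any two edges are related by an
element of `G`. The elements of `G` need not be automorphisms of `Γ`. -/
def ActsEdgeTransitively : Prop :=
  ∀ e ∈ Γ.edgeSet, ∀ e' ∈ Γ.edgeSet, ∃ g : G, e.map (g • ·) = e'

lemma ActsEdgeTransitively.mem_orbit_or (h : ActsEdgeTransitively G Γ) {a b v w : V}
    (hab : Γ.Adj a b) (hvw : Γ.Adj v w) :
    v ∈ MulAction.orbit G a ∧ w ∈ MulAction.orbit G b ∨
      v ∈ MulAction.orbit G b ∧ w ∈ MulAction.orbit G a := by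
  obtain ⟨g, hg⟩ := h s(a, b) hab s(v, w) hvw
  rcases Sym2.eq_iff.mp hg with ⟨hav, hbw⟩ | ⟨haw, hbv⟩
  · exact Or.inl ⟨⟨g, hav⟩, ⟨g, hbw⟩⟩
  · exact Or.inr ⟨⟨g, hbv⟩, ⟨g, haw⟩⟩

lemma ActsEdgeTransitively.isBipartiteWith_orbits (h : ActsEdgeTransitively G Γ) {a b : V}
    (hab : Γ.Adj a b) (hb : b ∉ MulAction.orbit G a) :
    Γ.IsBipartiteWith (MulAction.orbit G a) (MulAction.orbit G b) where
  disjoint := (MulAction.orbit.eq_or_disjoint a b).resolve_left fun hO =>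
    hb (hO ▸ MulAction.mem_orbit_self b)
  mem_of_adj _ _ := h.mem_orbit_or hab

theorem vertex_transitive_of_edgeTransitive_general (h : ActsEdgeTransitively G Γ)
    (hadj : ∀ v, ∃ w, Γ.Adj v w) (hΓ : ¬Γ.IsBipartite) : MulAction.IsPretransitive G V where
  exists_smul_eq v w := by
    obtain ⟨v', hv⟩ := hadj v
    obtain ⟨w', hw⟩ := hadj w
    have hv' : v' ∈ MulAction.orbit G v := by
      by_contra hv'
      exact hΓ (h.isBipartiteWith_orbits hv hv').isBipartite
    rcases h.mem_orbit_or hv hw with ⟨hwv, -⟩ | ⟨hwv', -⟩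
    · exact hwv
    · exact (MulAction.orbit_eq_iff.mpr hv').subset hwv'

end GraphAction

namespace SimplicialSurface

variable {α : Type*} [Fintype α] [DecidableEq α] (X : SimplicialSurface α)

/-- The 1-skeleton of `X`, as a graph on its vertices. -/
def graph : SimpleGraph α where
  Adj a b := {a, b} ∈ X.edges
  symm := ⟨fun a b h => by rwa [Finset.pair_comm]⟩
  loopless := ⟨fun a h => by simp [edges] at h⟩

variable {X}

lemma isClique_graph_of_mem_cplx {s : Finset α} (hs : s ∈ X.cplx) : X.graph.IsClique s := by
  intro a ha b hb hab
  have hsub : {a, b} ⊆ s := Finset.insert_subset ha (Finset.singleton_subset_iff.mpr hb)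
  exact Finset.mem_filter.mpr
    ⟨X.down_closed s hs _ (Finset.insert_nonempty a {b}) hsub, Finset.card_pair hab⟩

lemma EdgeTransitive.actsEdgeTransitively (hX : X.EdgeTransitive) :
    ActsEdgeTransitively X.aut X.graph := by
  rintro ⟨a, b⟩ hab ⟨c, d⟩ hcd
  obtain ⟨π, hπ, himage⟩ := hX {a, b} hab {c, d} hcd
  refine ⟨⟨π, hπ⟩, Sym2.ext fun x => ?_⟩
  simpa using Finset.ext_iff.mp himage x

variable (X)

lemma exists_graph_adj (v : α) : ∃ w, X.graph.Adj v w := by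
  obtain ⟨F, hF, hv, hcard⟩ := X.pure_two {v} (X.all_vertices v)
  obtain ⟨w, hw, hwv⟩ := Finset.exists_mem_ne (by omega : 1 < F.card) v
  exact ⟨w, isClique_graph_of_mem_cplx hF (Finset.singleton_subset_iff.mp hv) hw hwv.symm⟩

lemma not_isBipartite_graph : ¬X.graph.IsBipartite := by
  obtain ⟨F, hF, hcard⟩ := X.dim_two
  exact fun h => h.cliqueFree (by norm_num : 2 < 3) F ⟨isClique_graph_of_mem_cplx hF, hcard⟩

end SimplicialSurface

/-- If `X` is an edge-transitive simplicial surface, then `Aut(X)` acts transitively on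
the set `X_0` of vertices of `X`. -/
theorem vertex_transitive_of_edgeTransitive
    {α : Type*} [Fintype α] [DecidableEq α] (X : SimplicialSurface α)
    (hX : X.EdgeTransitive) (v w : α) :
    ∃ π ∈ X.aut, π v = w := by
  obtain ⟨π, hπ⟩ := (vertex_transitive_of_edgeTransitive_general hX.actsEdgeTransitively
    X.exists_graph_adj X.not_isBipartite_graph).exists_smul_eq v w
  exact ⟨π, π.2, hπ⟩
end

section
/- Let X be an edge-transitive simplicial surface and e an edge of X. Then the stabiliser of e in Aut(X) embeds into the group C_2 × C_2, i.e. there exists an injective group homomorphism from Stab_{Aut(X)}(e) into (Z/2Z) × (Z/2Z). -/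
open Finset

/-!
The stabiliser of an edge `e` permutes the two vertices of `e` and the two faces containing `e`,
and each pair has symmetric group `C₂`. An element of the kernel of both actions fixes `e` pointwise
and preserves a face containing `e`, hence also fixes the third vertex of that face. Pointwise
fixation spreads from a face to each neighbour across an edge, since only two faces meet there, so
by connectedness such an element is the identity.
-/

theorem eqOn_id_of_card_le_card_add_one {β : Type*} {f : β → β} {s t : Finset β}
    (hf : Set.InjOn f t) (hst : s ⊆ t) (hcard : #t ≤ #s + 1) (hmaps : Set.MapsTo f t t)
    (hs : Set.EqOn f id s) : Set.EqOn f id t := by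
  classical
  intro x hx
  by_cases hxs : x ∈ s
  · exact hs hxs
  have hfxs : f x ∉ s := fun hfx => hxs (hf (hmaps hx) hx (hs hfx) ▸ hfx)
  have hsub : #(t \ s) ≤ 1 := by rw [card_sdiff_of_subset hst]; lia
  exact card_le_one.1 hsub _ (mem_sdiff.2 ⟨hmaps hx, hfxs⟩) _ (mem_sdiff.2 ⟨hx, hxs⟩)

theorem nonempty_perm_mulEquiv_of_card_eq_two {β : Type*} (hβ : Nat.card β = 2) :
    Nonempty (Equiv.Perm β ≃* Multiplicative (ZMod 2)) := by
  have : Finite β := Nat.finite_of_card_ne_zero (by simp [hβ])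
  exact ⟨mulEquivOfPrimeCardEq (p := 2) (by rw [Nat.card_perm, hβ]; rfl) (by simp)⟩

theorem exists_injective_monoidHom_of_card_eq_two {G β γ : Type*} [Group G] [MulAction G β]
    [MulAction G γ] (hβ : Nat.card β = 2) (hγ : Nat.card γ = 2)
    (hfaithful : ∀ g : G, (∀ b : β, g • b = b) → (∀ c : γ, g • c = c) → g = 1) :
    ∃ f : G →* Multiplicative (ZMod 2) × Multiplicative (ZMod 2), Function.Injective f := by
  obtain ⟨i⟩ := nonempty_perm_mulEquiv_of_card_eq_two hβ
  obtain ⟨j⟩ := nonempty_perm_mulEquiv_of_card_eq_two hγ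
  refine ⟨(i.toMonoidHom.comp (MulAction.toPermHom G β)).prod
    (j.toMonoidHom.comp (MulAction.toPermHom G γ)), (injective_iff_map_eq_one _).2 fun g hg => ?_⟩
  obtain ⟨hgβ, hgγ⟩ := Prod.mk_eq_one.1 hg
  exact hfaithful g (Equiv.ext_iff.1 ((map_eq_one_iff i i.injective).1 hgβ))
    (Equiv.ext_iff.1 ((map_eq_one_iff j j.injective).1 hgγ))

namespace SimplicialSurface

variable {α : Type*} [Fintype α] [DecidableEq α] {X : SimplicialSurface α}
  {φ : Equiv.Perm α} {e s F G : Finset α}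

theorem mem_faces : F ∈ X.faces ↔ F ∈ X.cplx ∧ #F = 3 := mem_filter

theorem mem_edges : e ∈ X.edges ↔ e ∈ X.cplx ∧ #e = 2 := mem_filter

theorem mem_edges_of_subset_of_mem_cplx (hs : s ∈ X.cplx) (hes : e ⊆ s) (he : #e = 2) :
    e ∈ X.edges :=
  mem_edges.2 ⟨X.down_closed s hs e (card_pos.1 (by lia)) hes, he⟩

theorem image_mem_faces (hφ : φ ∈ X.aut) (hF : F ∈ X.faces) : F.image φ ∈ X.faces := by
  rw [mem_faces] at hF ⊢
  exact ⟨(hφ F).1 hF.1, (card_image_of_injective F φ.injective).trans hF.2⟩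

theorem mem_stab_of_eqOn_id (hφ : φ ∈ X.aut) (hs : Set.EqOn φ id s) : φ ∈ X.stab s :=
  ⟨hφ, (image_congr hs).trans image_id⟩

variable (X) in
/-- The faces of `X` containing the vertex set `s`; for an edge, its two incident faces. -/
def facesContaining (s : Finset α) : Finset (Finset α) := {F ∈ X.faces | s ⊆ F}

theorem mem_facesContaining : F ∈ X.facesContaining s ↔ F ∈ X.faces ∧ s ⊆ F := mem_filter

theorem card_facesContaining (he : e ∈ X.edges) : #(X.facesContaining e) = 2 := by
  rw [← X.edge_in_two_faces e (mem_edges.1 he).1 (mem_edges.1 he).2]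
  congr 1
  ext F
  rw [mem_facesContaining, mem_faces, mem_filter]
  tauto

theorem image_mem_facesContaining (hφ : φ ∈ X.stab s) (hF : F ∈ X.facesContaining s) :
    F.image φ ∈ X.facesContaining s := by
  rw [mem_facesContaining] at hF ⊢
  exact ⟨image_mem_faces hφ.1 hF.1, hφ.2 ▸ image_subset_image hF.2⟩

theorem eqOn_id_of_image_eq (he : e ∈ X.edges) (hF : F ∈ X.facesContaining e)
    (hfix : Set.EqOn φ id e) (hφF : F.image φ = F) : Set.EqOn φ id F := by
  obtain ⟨hF, heF⟩ := mem_facesContaining.1 hF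
  refine eqOn_id_of_card_le_card_add_one φ.injective.injOn heF ?_ ?_ hfix
  · rw [(mem_faces.1 hF).2, (mem_edges.1 he).2]
  · exact fun x hx => mem_coe.2 (hφF.subset (mem_image_of_mem φ hx))

theorem eqOn_id_of_mem_facesContaining (hφ : φ ∈ X.aut) (he : e ∈ X.edges)
    (hF : F ∈ X.facesContaining e) (hG : G ∈ X.facesContaining e) (hfix : Set.EqOn φ id F) :
    Set.EqOn φ id G := by
  have hfix_e : Set.EqOn φ id e := hfix.mono (mem_facesContaining.1 hF).2
  have hfix_faces : Set.EqOn (image φ) id (X.facesContaining e) := by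
    refine eqOn_id_of_card_le_card_add_one (image_injective φ.injective).injOn
      (singleton_subset_iff.2 hF) ?_
      (fun _ => image_mem_facesContaining (mem_stab_of_eqOn_id hφ hfix_e)) ?_
    · rw [card_facesContaining he, card_singleton]
    · simpa using (mem_stab_of_eqOn_id hφ hfix).2
  exact eqOn_id_of_image_eq he hG hfix_e (hfix_faces hG)

/- The relation in `connected` also relates an edge to a face containing it, so a chain need not
consist of faces; the induction therefore runs over all faces above the current member. -/
theorem eqOn_id_of_reflTransGen (hφ : φ ∈ X.aut) (hF : F ∈ X.faces) (hfix : Set.EqOn φ id F)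
    (hFs : Relation.ReflTransGen (fun A B => A ∈ X.cplx ∧ B ∈ X.cplx ∧ #(A ∩ B) = 2) F s) :
    ∀ G ∈ X.facesContaining s, Set.EqOn φ id G := by
  induction hFs with
  | refl =>
    intro G hG
    obtain ⟨hG, hFG⟩ := mem_facesContaining.1 hG
    rwa [← eq_of_subset_of_card_le hFG ((mem_faces.1 hG).2.trans_le (mem_faces.1 hF).2.ge)]
  | @tail A B _ hAB ih =>
    intro G hG
    obtain ⟨hA, -, hcard⟩ := hAB
    obtain ⟨hG, hBG⟩ := mem_facesContaining.1 hG
    obtain ⟨K, hK, hAK, hK3⟩ := X.pure_two A hA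
    have hKface : K ∈ X.faces := mem_faces.2 ⟨hK, hK3⟩
    have hedge : A ∩ B ∈ X.edges := mem_edges_of_subset_of_mem_cplx hA inter_subset_left hcard
    exact eqOn_id_of_mem_facesContaining hφ hedge
      (mem_facesContaining.2 ⟨hKface, inter_subset_left.trans hAK⟩)
      (mem_facesContaining.2 ⟨hG, inter_subset_right.trans hBG⟩)
      (ih K (mem_facesContaining.2 ⟨hKface, hAK⟩))

theorem eq_one_of_eqOn_id (hφ : φ ∈ X.aut) (hF : F ∈ X.faces) (hfix : Set.EqOn φ id F) :
    φ = 1 := by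
  ext x
  obtain ⟨G, hG, hxG, hG3⟩ := X.pure_two {x} (X.all_vertices x)
  have hchain := X.connected F (mem_faces.1 hF).1 G hG (mem_faces.1 hF).2 hG3
  exact eqOn_id_of_reflTransGen hφ hF hfix hchain G
    (mem_facesContaining.2 ⟨mem_faces.2 ⟨hG, hG3⟩, Subset.rfl⟩) (singleton_subset_iff.1 hxG)

open scoped Pointwise

variable (X) in
/-- The action of the stabiliser of `s` on the vertices in `s`. -/
def stabVertices (s : Finset α) : SubMulAction (X.stab s) α where
  carrier := s
  smul_mem' g _ hx := mem_coe.2 (g.2.2.subset (mem_image_of_mem g.1 hx))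

variable (X) in
/-- The action of the stabiliser of `s` on the faces containing `s`, obtained by restricting the
pointwise action on sets of vertices. -/
def stabFaces (s : Finset α) : SubMulAction (X.stab s) (Finset α) where
  carrier := X.facesContaining s
  smul_mem' g _ hF := image_mem_facesContaining g.2 hF

theorem card_stabVertices (he : e ∈ X.edges) : Nat.card (X.stabVertices e) = 2 :=
  (Nat.card_eq_card_toFinset (e : Set α)).trans (by simpa using (mem_edges.1 he).2)

theorem card_stabFaces (he : e ∈ X.edges) : Nat.card (X.stabFaces e) = 2 :=
  (Nat.card_eq_card_toFinset (X.facesContaining e : Set (Finset α))).trans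
    (by simpa using card_facesContaining he)

theorem stab_eq_one_of_smul_eq (he : e ∈ X.edges) (g : X.stab e)
    (hvertices : ∀ v : X.stabVertices e, g • v = v) (hfaces : ∀ F : X.stabFaces e, g • F = F) :
    g = 1 := by
  obtain ⟨F, hF⟩ : (X.facesContaining e).Nonempty :=
    card_pos.1 (by rw [card_facesContaining he]; exact two_pos)
  have hfix_e : Set.EqOn g.1 id e := fun x hx => congrArg Subtype.val (hvertices ⟨x, hx⟩)
  have himage : F.image g.1 = F := congrArg Subtype.val (hfaces ⟨F, hF⟩)
  exact Subtype.ext (eq_one_of_eqOn_id g.2.1 (mem_facesContaining.1 hF).1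
    (eqOn_id_of_image_eq he hF hfix_e himage))

end SimplicialSurface

open scoped Pointwise in
theorem stab_embeds_into_C2_times_C2_general
    {α : Type*} [Fintype α] [DecidableEq α] (X : SimplicialSurface α)
    (e : Finset α) (he : e ∈ X.edges) :
    ∃ f : (X.stab e) →* Multiplicative (ZMod 2) × Multiplicative (ZMod 2),
      Function.Injective f :=
  exists_injective_monoidHom_of_card_eq_two (SimplicialSurface.card_stabVertices he)
    (SimplicialSurface.card_stabFaces he) (SimplicialSurface.stab_eq_one_of_smul_eq he)

/-- If `X` is an edge-transitive simplicial surface and `e` an edge of `X`, then the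
stabiliser of `e` in `Aut(X)` embeds into `C₂ × C₂`. -/
theorem stab_embeds_into_C2_times_C2
    {α : Type*} [Fintype α] [DecidableEq α] (X : SimplicialSurface α)
    (hX : X.EdgeTransitive) (e : Finset α) (he : e ∈ X.edges) :
    ∃ f : (X.stab e) →* Multiplicative (ZMod 2) × Multiplicative (ZMod 2),
      Function.Injective f := by
  exact stab_embeds_into_C2_times_C2_general X e he
end
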